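/- arXiv:math/0205029 — 6 statements merged into one kernel-verified Lean document; each statement's English description precedes it below -/
import Mathlib

section
/- Let G be a group, let Γ be a simple graph on the vertex set {1,…,n} which is a forest, and let t₁,…,tₙ ∈ G be elements such that tᵢ and tⱼ commute whenever i ≠ j and the vertices i and j are not adjacent in Γ. Then for every permutation π of {1,…,n} there exists an element f of the subgroup of G generated by t₁,…,tₙ such that T_π = f · T_id · f⁻¹, where T_σ denotes the ordered product t_{σ(n)} · t_{σ(n−1)} · ⋯ · t_{σ(1)}. -/
/-- A finite acyclic graph with two or more vertices has a vertex with at most one neighbour. -/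
theorem forest_leaf {V : Type*} [Finite V] [Nontrivial V] (H : SimpleGraph V) (h : H.IsAcyclic) :
    ∃ v u : V, u ≠ v ∧ ∀ w, H.Adj v w → w = u := by
  classical
  by_cases hE : ∃ a b, H.Adj a b
  · obtain ⟨a, b, hab⟩ := hE
    have ⟨u, v, p, hp, hmax⟩ := SimpleGraph.Walk.exists_isPath_forall_isPath_length_le_length H
    have hnil : ¬p.Nil := by
      have h1 := hmax _ _ (SimpleGraph.Walk.cons hab SimpleGraph.Walk.nil) (by simp [hab.ne])
      intro hn
      have := SimpleGraph.Walk.length_eq_zero_iff.mpr hn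
      simp at h1
      omega
    refine ⟨u, p.snd, (p.adj_snd hnil).ne', fun w hadj ↦ ?_⟩
    apply h.eq_snd_of_adj_start hp hadj
    have : ¬(p.cons hadj.symm).IsPath := by grind [SimpleGraph.Walk.length_cons]
    grind [hp.cons]
  · obtain ⟨a, b, hab⟩ := exists_pair_ne V
    exact ⟨a, b, hab.symm, fun w hw => (hE ⟨_, _, hw⟩).elim⟩

/-- Leaf lemma relative to a list of vertices. -/
theorem forest_leaf_list {V : Type*} (H : SimpleGraph V) (h : H.IsAcyclic) (l : List V)
    (hl : l.Nodup) (h2 : 2 ≤ l.length) :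
    ∃ v ∈ l, ∃ u ∈ l, u ≠ v ∧ ∀ w ∈ l, H.Adj v w → w = u := by
  let s : Set V := {x | x ∈ l}
  have : Finite s := List.finite_toSet l
  have : Nontrivial s := by
    refine ⟨⟨l[0], List.getElem_mem _⟩, ⟨l[1], List.getElem_mem _⟩, ?_⟩
    intro hh
    have h01 : l[0] = l[1] := congrArg Subtype.val hh
    have := (hl.getElem_inj_iff).mp h01
    omega
  obtain ⟨v, u, huv, hw⟩ := forest_leaf (H.induce s) (h.induce s)
  refine ⟨v, v.2, u, u.2, fun e => huv (Subtype.ext e), fun w hwl ha => ?_⟩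
  exact congrArg Subtype.val (hw ⟨w, hwl⟩ ha)

/-- Absorbing the leaf `v` into its neighbour `u`. -/
theorem absorb_leaf {V G : Type*} [DecidableEq V] [Group G] (t : V → G) (u : V) (g : G)
    (r : List V) (hr : r.Nodup) (hu : u ∈ r) (hc : ∀ w ∈ r, w ≠ u → Commute g (t w)) :
    g * (r.map t).prod = (r.map (Function.update t u (g * t u))).prod := by
  induction r with
  | nil => simp at hu
  | cons a r ih =>
    rw [List.nodup_cons] at hr
    by_cases hau : a = u
    · subst hau
      have : r.map (Function.update t a (g * t a)) = r.map t := by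
        apply List.map_congr_left
        intro x hx
        rw [Function.update_of_ne]
        rintro rfl
        exact hr.1 hx
      simp [this, mul_assoc]
    · have hu' : u ∈ r := by
        rcases List.mem_cons.mp hu with e | e
        · exact (hau e.symm).elim
        · exact e
      have := ih hr.2 hu' (fun w hw => hc w (List.mem_cons_of_mem _ hw))
      simp only [List.map_cons, List.prod_cons, Function.update_of_ne hau, ← this]
      rw [← mul_assoc, (hc a (by simp) hau).eq, mul_assoc]

/-- Rotating `v` to the front is a conjugation. -/
theorem rotate_front {V G : Type*} [Group G] (t : V → G) (v : V) (l : List V) (hv : v ∈ l) :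
    ∃ r : List V, l.Perm (v :: r) ∧ ∃ f ∈ Subgroup.closure (Set.range t),
      (l.map t).prod = f * (t v * (r.map t).prod) * f⁻¹ := by
  obtain ⟨a, b, rfl⟩ := List.append_of_mem hv
  refine ⟨b ++ a, ?_, (a.map t).prod, ?_, ?_⟩
  · have := List.perm_append_comm (l₁ := a) (l₂ := v :: b)
    simpa using this
  · apply Subgroup.list_prod_mem
    intro x hx
    obtain ⟨y, _, rfl⟩ := List.mem_map.mp hx
    exact Subgroup.subset_closure ⟨y, rfl⟩
  · simp [mul_assoc]

theorem forest_conj {V G : Type*} [Group G] (Γ : SimpleGraph V) (hΓ : Γ.IsAcyclic) (k : ℕ) :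
    ∀ (t : V → G) (l m : List V), l.length = k → l.Nodup → l.Perm m →
      (∀ i ∈ l, ∀ j ∈ l, i ≠ j → ¬ Γ.Adj i j → Commute (t i) (t j)) →
      ∃ f ∈ Subgroup.closure (Set.range t), (l.map t).prod = f * (m.map t).prod * f⁻¹ := by
  classical
  induction k with
  | zero =>
    intro t l m hk _ hp _
    obtain rfl := List.length_eq_zero_iff.mp hk
    obtain rfl := List.nil_perm.mp hp
    exact ⟨1, one_mem _, by simp⟩
  | succ k ih =>
    intro t l m hk hl hp hc
    by_cases h2 : 2 ≤ l.length
    · obtain ⟨v, hv, u, hu, huv, hw⟩ := forest_leaf_list Γ hΓ l hl h2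
      obtain ⟨r, hr, f, hf, hfe⟩ := rotate_front t v l hv
      obtain ⟨q, hq, g, hg, hge⟩ := rotate_front t v m (hp.mem_iff.mp hv)
      have hrq : r.Perm q := (List.perm_cons v).mp (hr.symm.trans (hp.trans hq))
      have hn := hr.nodup_iff.mp hl
      rw [List.nodup_cons] at hn
      have hrl : ∀ x ∈ r, x ∈ l ∧ x ≠ v := fun x hx =>
        ⟨hr.mem_iff.mpr (List.mem_cons_of_mem _ hx), fun e => hn.1 (e ▸ hx)⟩
      have hur : u ∈ r := by
        rcases List.mem_cons.mp (hr.mem_iff.mp hu) with e | e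
        · exact (huv e).elim
        · exact e
      have hcv : ∀ w ∈ r, w ≠ u → Commute (t v) (t w) := fun w hwr hwu =>
        hc v hv w (hrl w hwr).1 (hrl w hwr).2.symm (fun ha => hwu (hw w (hrl w hwr).1 ha))
      rw [absorb_leaf t u (t v) r hn.2 hur hcv] at hfe
      rw [absorb_leaf t u (t v) q (hrq.nodup_iff.mp hn.2) (hrq.mem_iff.mp hur)
        (fun w hwq => hcv w (hrq.mem_iff.mpr hwq))] at hge
      have hlen : r.length = k := by
        have := hr.length_eq
        simp at this
        omega
      obtain ⟨c, hcm, hce⟩ := ih (Function.update t u (t v * t u)) r q hlen hn.2 hrq (by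
        intro i hi j hj hij ha
        have hcc := hc i (hrl i hi).1 j (hrl j hj).1 hij ha
        by_cases hiu : i = u
        · subst hiu
          rw [Function.update_self, Function.update_of_ne hij.symm]
          exact (hcv j hj hij.symm).mul_left hcc
        · by_cases hju : j = u
          · subst hju
            rw [Function.update_self, Function.update_of_ne hij]
            exact (hcv i hi hij).symm.mul_right hcc
          · rw [Function.update_of_ne hiu, Function.update_of_ne hju]
            exact hcc)
      have hsub : Subgroup.closure (Set.range (Function.update t u (t v * t u))) ≤
          Subgroup.closure (Set.range t) := by
        rw [Subgroup.closure_le]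
        rintro _ ⟨x, rfl⟩
        by_cases hx : x = u
        · subst hx
          rw [Function.update_self]
          exact mul_mem (Subgroup.subset_closure ⟨v, rfl⟩) (Subgroup.subset_closure ⟨x, rfl⟩)
        · rw [Function.update_of_ne hx]
          exact Subgroup.subset_closure ⟨x, rfl⟩
      refine ⟨f * c * g⁻¹, mul_mem (mul_mem hf (hsub hcm)) (inv_mem hg), ?_⟩
      rw [hfe, hge, hce]
      group
    · obtain ⟨a, rfl⟩ := List.length_eq_one_iff.mp (show l.length = 1 by omega)
      obtain rfl := List.singleton_perm.mp hp
      exact ⟨1, one_mem _, by simp⟩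

/-- Group-theoretic content of the paper's Lemma: if the "intersection graph" of
the generators `t i` is a forest (non-adjacent distinct generators commute), then
the ordered product `t (π (n-1)) * ⋯ * t (π 0)` is conjugate to
`t (n-1) * ⋯ * t 0` by an element of the subgroup generated by the `t i`. -/
theorem stmt_0 {G : Type*} [Group G] {n : ℕ} (Γ : SimpleGraph (Fin n))
    (hΓ : Γ.IsAcyclic) (t : Fin n → G)
    (hcomm : ∀ i j : Fin n, i ≠ j → ¬ Γ.Adj i j → Commute (t i) (t j))
    (π : Equiv.Perm (Fin n)) :
    ∃ f ∈ Subgroup.closure (Set.range t),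
      ((List.finRange n).reverse.map (fun i => t (π i))).prod =
        f * ((List.finRange n).reverse.map t).prod * f⁻¹ := by
  have hnd : ((List.finRange n).reverse.map π).Nodup :=
    (List.nodup_reverse.mpr (List.nodup_finRange n)).map π.injective
  have hperm : ((List.finRange n).reverse.map π).Perm (List.finRange n).reverse := by
    rw [List.perm_ext_iff_of_nodup hnd (List.nodup_reverse.mpr (List.nodup_finRange n))]
    intro a
    simp only [List.mem_map, List.mem_reverse, List.mem_finRange, true_and, iff_true]
    exact π.surjective a
  have := forest_conj Γ hΓ _ t _ _ rfl hnd hperm (fun i _ j _ => hcomm i j)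
  rw [List.map_map] at this
  exact this
end

section
/- Let Γ be a forest with vertex set V of cardinality n ≥ 1. An arrangement of V around a circle with n positions is a bijection c : ℤ/nℤ → V. An elementary move replaces an arrangement c by the arrangement obtained from c by interchanging the labels at two cyclically consecutive positions p and p+1, and is allowed only if the labels c(p) and c(p+1) are not adjacent in Γ. Then for any two arrangements c and c′ there is a finite sequence of elementary moves carrying c to a rotation of c′, i.e., to an arrangement of the form q ↦ c′(q + r) for some r ∈ ℤ/nℤ. -/
namespace CircArr

/-- Equivalence of lists generated by rotations and by swaps of non-adjacent labels. -/
inductive E {V : Type*} (Γ : SimpleGraph V) : List V → List V → Prop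
  | swap (x y : V) (l : List V) : ¬ Γ.Adj x y → E Γ (x :: y :: l) (y :: x :: l)
  | rot (x : V) (l : List V) : E Γ (x :: l) (l ++ [x])
  | refl (l : List V) : E Γ l l
  | symm {l m : List V} : E Γ l m → E Γ m l
  | trans {l m k : List V} : E Γ l m → E Γ m k → E Γ l k

variable {V : Type*} {Γ : SimpleGraph V}

theorem E.perm {l m : List V} (h : E Γ l m) : l.Perm m := by
  induction h with
  | swap x y l _ => exact List.Perm.swap _ _ _
  | rot x l => exact (List.perm_append_singleton x l).symm
  | refl l => exact List.Perm.refl _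
  | symm _ ih => exact ih.symm
  | trans _ _ ih1 ih2 => exact ih1.trans ih2

theorem E.rotate (a b : List V) : E Γ (a ++ b) (b ++ a) := by
  induction a generalizing b with
  | nil => simpa using E.refl b
  | cons x a ih =>
    have h1 : E Γ (x :: (a ++ b)) ((a ++ b) ++ [x]) := E.rot _ _
    have h2 := ih (b ++ [x])
    simp only [List.append_assoc, List.cons_append, List.nil_append] at *
    exact h1.trans h2

/-- `v` moves past a block of non-neighbours. -/
theorem E.pass (v : V) (a b : List V) (h : ∀ x ∈ a, ¬ Γ.Adj v x) :
    E Γ (v :: (a ++ b)) (v :: (b ++ a)) := by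
  induction a generalizing b with
  | nil => simpa using E.refl _
  | cons x a ih =>
    have h1 : E Γ (v :: x :: (a ++ b)) (x :: v :: (a ++ b)) := E.swap _ _ _ (h x (by simp))
    have h2 : E Γ (x :: v :: (a ++ b)) (v :: (a ++ b) ++ [x]) := E.rot _ _
    have h3 := ih (b ++ [x]) (fun y hy => h y (by simp [hy]))
    simp only [List.append_assoc, List.cons_append, List.nil_append] at *
    exact (h1.trans h2).trans h3

theorem E.around (v w : V) (a b : List V) (hnd : (a ++ b).Nodup)
    (h : ∀ x ∈ a ++ b, x ≠ w → ¬ Γ.Adj v x) :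
    E Γ (v :: (a ++ b)) (v :: (b ++ a)) := by
  by_cases hw : w ∈ a
  · refine (E.pass v b a fun x hx => h x (by simp [hx]) ?_).symm
    rintro rfl
    exact (List.disjoint_of_nodup_append hnd) hw hx
  · refine E.pass v a b fun x hx => h x (by simp [hx]) ?_
    rintro rfl
    exact hw hx

theorem E.lift (v w : V) {l m : List V} (e : E Γ l m) (hnd : l.Nodup)
    (h : ∀ x ∈ l, x ≠ w → ¬ Γ.Adj v x) : E Γ (v :: l) (v :: m) := by
  induction e with
  | swap x y l hxy =>
    have key : ∀ x y : V, (x :: y :: l).Nodup →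
        (∀ z ∈ x :: y :: l, z ≠ w → ¬ Γ.Adj v z) →
        E Γ (v :: x :: y :: l) (x :: y :: v :: l) := by
      intro x y hnd h
      have h1 := E.around (Γ := Γ) v w [x, y] l hnd h
      have h2 := E.rotate (Γ := Γ) (v :: l) [x, y]
      simp only [List.cons_append, List.nil_append] at *
      exact h1.trans h2
    have hp : (x :: y :: l).Perm (y :: x :: l) := List.Perm.swap _ _ _
    exact ((key x y hnd h).trans (E.swap x y _ hxy)).trans
      (key y x (hp.nodup_iff.1 hnd) (fun z hz => h z (hp.mem_iff.2 hz))).symm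
  | rot x l => exact E.around v w [x] l hnd h
  | refl l => exact E.refl _
  | symm e ih =>
    exact (ih (e.perm.nodup_iff.2 hnd) (fun z hz => h z (e.perm.mem_iff.1 hz))).symm
  | trans e1 e2 ih1 ih2 =>
    exact (ih1 hnd h).trans
      (ih2 (e1.perm.nodup_iff.1 hnd) (fun z hz => h z (e1.perm.mem_iff.2 hz)))

theorem exists_leaf (hΓ : Γ.IsAcyclic) (l : List V) (hl : l ≠ []) :
    ∃ v ∈ l, ∃ w, ∀ x ∈ l, x ≠ w → ¬ Γ.Adj v x := by
  classical
  let S : Set V := {x | x ∈ l}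
  have hfin : Finite S := (List.finite_toSet l)
  have hne : Nonempty S := by
    obtain ⟨x, hx⟩ := List.exists_mem_of_ne_nil l hl
    exact ⟨⟨x, hx⟩⟩
  have hac := hΓ.induce S
  obtain ⟨u, v, p, hp, hmax⟩ :=
    SimpleGraph.Walk.exists_isPath_forall_isPath_length_le_length (Γ.induce S)
  refine ⟨u, u.2, (p.snd : V), fun x hx hxw hadj => hxw ?_⟩
  have hadj' : (Γ.induce S).Adj u ⟨x, hx⟩ := hadj
  have hs : (⟨x, hx⟩ : S) ∈ p.support := by
    by_contra hns
    have := hmax _ _ (SimpleGraph.Walk.cons hadj'.symm p) (hp.cons hns)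
    simp at this
  have := hac.eq_snd_of_adj_start hp hadj' hs
  exact congrArg Subtype.val this

theorem E.of_perm (hΓ : Γ.IsAcyclic) (n : ℕ) : ∀ l m : List V, l.length = n → l.Nodup →
    l.Perm m → E Γ l m := by
  induction n with
  | zero =>
    intro l m hl _ hp
    obtain rfl := List.length_eq_zero_iff.1 hl
    obtain rfl := hp.nil_eq
    exact E.refl _
  | succ n ih =>
    intro l m hl hnd hp
    obtain ⟨v, hv, w, hw⟩ := exists_leaf hΓ l (by rintro rfl; simp at hl)
    obtain ⟨a, b, rfl⟩ := List.append_of_mem hv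
    obtain ⟨a', b', rfl⟩ := List.append_of_mem (hp.mem_iff.1 hv)
    have e1 : E Γ (a ++ v :: b) (v :: (b ++ a)) := E.rotate a (v :: b)
    have e2 : E Γ (a' ++ v :: b') (v :: (b' ++ a')) := E.rotate a' (v :: b')
    have hp' : (v :: (b ++ a)).Perm (v :: (b' ++ a')) := (e1.perm.symm.trans hp).trans e2.perm
    have hnd' := e1.perm.nodup_iff.1 hnd
    have e3 := ih (b ++ a) (b' ++ a') (by simp at hl ⊢; omega) (List.nodup_cons.1 hnd').2
      (List.perm_cons v |>.1 hp')
    refine (e1.trans (E.lift v w e3 (List.nodup_cons.1 hnd').2 ?_)).trans e2.symm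
    intro x hx
    exact hw x (by simp at hx ⊢; tauto)

/-- Elementary move on labellings. -/
def Move (Γ : SimpleGraph V) (n : ℕ) (a b : ZMod n → V) : Prop :=
  ∃ p : ZMod n, ¬ Γ.Adj (a p) (a (p + 1)) ∧ b = a ∘ Equiv.swap p (p + 1)

theorem Move.symm {n : ℕ} {a b : ZMod n → V} (h : Move Γ n a b) : Move Γ n b a := by
  obtain ⟨p, hp, rfl⟩ := h
  refine ⟨p, ?_, ?_⟩
  · simpa [Γ.adj_comm] using hp
  · funext i; simp

theorem Move.rot {n : ℕ} {a b : ZMod n → V} (r : ZMod n) (h : Move Γ n a b) :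
    Move Γ n (fun i => a (i + r)) (fun i => b (i + r)) := by
  obtain ⟨p, hp, rfl⟩ := h
  refine ⟨p - r, ?_, ?_⟩
  · simpa [sub_add_eq_add_sub] using hp
  · funext i
    simp only [Function.comp, Equiv.swap_apply_def]
    have e1 : i = p - r ↔ i + r = p := eq_sub_iff_add_eq
    have e2 : i = p - r + 1 ↔ i + r = p + 1 := by
      rw [sub_add_eq_add_sub]; exact eq_sub_iff_add_eq
    simp only [e1, e2]
    split_ifs <;> congr 1 <;> ring

abbrev Reach (Γ : SimpleGraph V) (n : ℕ) := Relation.ReflTransGen (Move Γ n)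

theorem Reach.symm {n : ℕ} {a b : ZMod n → V} (h : Reach Γ n a b) : Reach Γ n b a := by
  induction h with
  | refl => exact .refl
  | tail _ h ih => exact Relation.ReflTransGen.head h.symm ih

theorem Reach.rot {n : ℕ} {a b : ZMod n → V} (r : ZMod n) (h : Reach Γ n a b) :
    Reach Γ n (fun i => a (i + r)) (fun i => b (i + r)) :=
  Relation.ReflTransGen.lift (fun (a : ZMod n → V) (i : ZMod n) => a (i + r))
    (fun _ _ h => Move.rot r h) _ _ h

def Rep (n : ℕ) (l : List V) (c : ZMod n → V) : Prop :=
  l.length = n ∧ ∀ i : ZMod n, l[i.val]? = some (c i)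

theorem reach_of_E {n : ℕ} [NeZero n] {l m : List V} (e : E Γ l m) :
    ∀ c d : ZMod n → V, Rep n l c → Rep n m d →
      ∃ r : ZMod n, Reach Γ n c (fun i => d (i + r)) := by
  induction e with
  | swap x y l hxy =>
    rintro c d ⟨hn, hc⟩ ⟨_, hd⟩
    have hn2 : l.length + 2 = n := by simpa using hn
    have : Fact (1 < n) := ⟨by omega⟩
    have v1 : (1 : ZMod n).val = 1 := ZMod.val_one n
    have v0 : (0 : ZMod n).val = 0 := ZMod.val_zero
    have c0 := hc 0
    have c1 := hc 1
    have d0 := hd 0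
    have d1 := hd 1
    simp [v0, v1] at c0 c1 d0 d1
    refine ⟨0, Relation.ReflTransGen.single ⟨0, ?_, ?_⟩⟩
    · simpa [← c0, ← c1] using hxy
    · funext i
      simp only [add_zero, zero_add, Function.comp, Equiv.swap_apply_def]
      split_ifs with h0 h1
      · rw [h0, ← d0, c1]
      · rw [h1, ← d1, c0]
      · have hi0 : i.val ≠ 0 := fun h => h0 (ZMod.val_injective n (by rw [h, v0]))
        have hi1 : i.val ≠ 1 := fun h => h1 (ZMod.val_injective n (by rw [h, v1]))
        obtain ⟨k, hk⟩ : ∃ k, i.val = k + 2 := ⟨i.val - 2, by omega⟩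
        have h1 := hc i
        have h2 := hd i
        rw [hk] at h1 h2
        simp at h1 h2
        rw [h1] at h2
        exact (Option.some.inj h2).symm
  | rot x l =>
    rintro c d ⟨hn, hc⟩ ⟨_, hd⟩
    have hn2 : l.length + 1 = n := by simpa using hn
    have key : ∀ i, d i = c (i + 1) := by
      intro i
      have h1 := hc (i + 1)
      have h2 := hd i
      have hlt := ZMod.val_lt i
      rw [ZMod.val_add, ZMod.val_one_eq_one_mod, Nat.add_mod_mod] at h1
      by_cases hi : i.val + 1 = n
      · rw [hi, Nat.mod_self] at h1
        have : i.val = l.length := by omega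
        rw [this] at h2
        simp at h1 h2
        rw [← h1, ← h2]
      · rw [Nat.mod_eq_of_lt (by omega)] at h1
        rw [List.getElem?_append_left (by omega)] at h2
        simp at h1
        rw [h1] at h2
        exact (Option.some.inj h2).symm
    refine ⟨-1, ?_⟩
    simp only [key, neg_add_cancel_right]
    exact .refl
  | refl l =>
    rintro c d ⟨hn, hc⟩ ⟨_, hd⟩
    have : c = d := by
      funext i
      exact Option.some.inj ((hc i).symm.trans (hd i))
    subst this
    exact ⟨0, by simp only [add_zero]; exact .refl⟩
  | symm e ih =>
    intro c d hc hd
    obtain ⟨r, hr⟩ := ih d c hd hc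
    refine ⟨-r, ?_⟩
    simpa using (hr.symm.rot (-r))
  | @trans l m k e1 e2 ih1 ih2 =>
    intro c d hc hd
    have hm : m.length = n := e1.perm.length_eq.symm.trans hc.1
    let f : ZMod n → V := fun i => m[i.val]'(by rw [hm]; exact ZMod.val_lt i)
    have hf : Rep n m f := ⟨hm, fun i => List.getElem?_eq_getElem _⟩
    obtain ⟨r, hr⟩ := ih1 c f hc hf
    obtain ⟨s, hs⟩ := ih2 f d hf hd
    refine ⟨r + s, hr.trans ?_⟩
    have := hs.rot r
    simpa only [add_assoc] using this

theorem reach_equiv {n : ℕ} (c : ZMod n ≃ V) {g : ZMod n → V} (h : Reach Γ n c g) :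
    ∃ d : ZMod n ≃ V, (d : ZMod n → V) = g ∧ Relation.ReflTransGen
      (fun a b : ZMod n ≃ V => ∃ p : ZMod n, ¬ Γ.Adj (a p) (a (p + 1)) ∧
        b = (Equiv.swap p (p + 1)).trans a) c d := by
  induction h with
  | refl => exact ⟨c, rfl, .refl⟩
  | tail _ h ih =>
    obtain ⟨d, rfl, hd⟩ := ih
    obtain ⟨p, hp, rfl⟩ := h
    exact ⟨(Equiv.swap p (p + 1)).trans d, rfl, hd.tail ⟨p, hp, rfl⟩⟩

theorem exists_rep {n : ℕ} [NeZero n] (c : ZMod n ≃ V) :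
    ∃ l : List V, Rep n l c ∧ l.Nodup ∧ ∀ x, x ∈ l := by
  refine ⟨List.ofFn (fun i : Fin n => c ((i : ℕ) : ZMod n)), ⟨by simp, fun i => ?_⟩, ?_, ?_⟩
  · rw [List.getElem?_ofFn]
    simp [ZMod.val_lt]
  · rw [List.nodup_ofFn]
    intro i j hij
    have := congrArg ZMod.val (c.injective hij)
    rw [ZMod.val_cast_of_lt i.2, ZMod.val_cast_of_lt j.2] at this
    exact Fin.ext this
  · intro x
    rw [List.mem_ofFn]
    exact ⟨⟨(c.symm x).val, ZMod.val_lt _⟩, by simp⟩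

end CircArr

/-- Combinatorial lemma: arrangements of the vertices of a forest around a circle;
elementary moves swap cyclically consecutive labels that are not adjacent in the
forest; any arrangement can be carried to a rotation of any other arrangement by
finitely many elementary moves. -/
theorem stmt_1 {V : Type*} [Fintype V] [DecidableEq V] (Γ : SimpleGraph V)
    (hΓ : Γ.IsAcyclic) (hn : 1 ≤ Fintype.card V)
    (c c' : ZMod (Fintype.card V) ≃ V) :
    ∃ r : ZMod (Fintype.card V),
      Relation.ReflTransGen
        (fun a b => ∃ p : ZMod (Fintype.card V),
          ¬ Γ.Adj (a p) (a (p + 1)) ∧ b = (Equiv.swap p (p + 1)).trans a)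
        c ((Equiv.addRight r).trans c') := by
  haveI : NeZero (Fintype.card V) := ⟨by omega⟩
  obtain ⟨l, hl, hnd, hmem⟩ := CircArr.exists_rep c
  obtain ⟨m, hm, hnd', hmem'⟩ := CircArr.exists_rep c'
  have hp : l.Perm m := (List.perm_ext_iff_of_nodup hnd hnd').2 (fun a => by simp [hmem, hmem'])
  obtain ⟨r, hr⟩ := CircArr.reach_of_E (CircArr.E.of_perm hΓ _ l m rfl hnd hp) c c' hl hm
  obtain ⟨d, hd, hreach⟩ := CircArr.reach_equiv c hr
  refine ⟨r, ?_⟩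
  have : d = (Equiv.addRight r).trans c' := by
    ext i
    rw [hd]
    rfl
  exact this ▸ hreach
end

section
/- Let V be a real vector space, ω : V × V → ℝ a bilinear form, and δ₁, …, δₙ ∈ V linearly independent vectors. For each i define the transvection Tᵢ : V → V by Tᵢ(x) = x + ω(x, δᵢ)·δᵢ, and let T = Tₙ ∘ Tₙ₋₁ ∘ ⋯ ∘ T₁. If x ∈ V satisfies T(x) = x, then ω(x, δᵢ) = 0 for every i = 1, …, n. -/
theorem foldl_sub_mem_span {V ι : Type*} [AddCommGroup V] [Module ℝ V]
    (ω : V →ₗ[ℝ] V →ₗ[ℝ] ℝ) (δ : ι → V) (l : List ι) (x : V) :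
    l.foldl (fun y i => y + ω y (δ i) • δ i) x - x ∈ Submodule.span ℝ (δ '' {i | i ∈ l}) := by
  induction l generalizing x with
  | nil => simp
  | cons a l ih =>
    rw [List.foldl_cons]
    have h1 := Submodule.span_mono (R := ℝ) (Set.image_mono (f := δ)
      (show {i | i ∈ l} ⊆ {i | i ∈ a :: l} from fun i hi => List.mem_cons_of_mem _ hi))
      (ih (x + ω x (δ a) • δ a))
    have h2 : ω x (δ a) • δ a ∈ Submodule.span ℝ (δ '' {i | i ∈ a :: l}) :=
      Submodule.smul_mem _ _ (Submodule.subset_span ⟨a, by simp, rfl⟩)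
    have h3 := Submodule.add_mem _ h1 h2
    convert h3 using 1
    abel

theorem fixed_pairing_zero {V ι : Type*} [AddCommGroup V] [Module ℝ V]
    (ω : V →ₗ[ℝ] V →ₗ[ℝ] ℝ) (δ : ι → V) (hδ : LinearIndependent ℝ δ)
    (l : List ι) (hl : l.Nodup) (x : V)
    (hx : l.foldl (fun y i => y + ω y (δ i) • δ i) x = x) :
    ∀ i ∈ l, ω x (δ i) = 0 := by
  induction l with
  | nil => simp
  | cons a l ih =>
    rw [List.nodup_cons] at hl
    rw [List.foldl_cons] at hx
    have h := foldl_sub_mem_span ω δ l (x + ω x (δ a) • δ a)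
    rw [hx, sub_add_cancel_left, Submodule.neg_mem_iff] at h
    have h0 : ω x (δ a) = 0 := by
      by_contra hc
      rw [Submodule.smul_mem_iff _ hc] at h
      exact hδ.notMem_span_image (s := {i | i ∈ l}) hl.1 h
    rw [h0, zero_smul, add_zero] at hx
    intro i hi
    rcases List.mem_cons.1 hi with rfl | hi
    · exact h0
    · exact ih hl.2 hx i hi

/-- If `δ₁, …, δₙ` are linearly independent and `T` is the composition of the
transvections `x ↦ x + ω(x, δᵢ) • δᵢ` (applied in the order `i = 1, …, n`), then
any fixed point `x` of `T` satisfies `ω(x, δᵢ) = 0` for every `i`. -/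
theorem stmt_4 {V : Type*} [AddCommGroup V] [Module ℝ V] {n : ℕ}
    (ω : V →ₗ[ℝ] V →ₗ[ℝ] ℝ) (δ : Fin n → V) (hδ : LinearIndependent ℝ δ)
    (x : V)
    (hx : (List.finRange n).foldl (fun y i => y + ω y (δ i) • δ i) x = x) :
    ∀ i : Fin n, ω x (δ i) = 0 := by
  exact fun i => fixed_pairing_zero ω δ hδ _ (List.nodup_finRange n) x hx i (List.mem_finRange i)
end

section
/- For all integers k and l, the characteristic polynomial of the 4 × 4 integer matrix M = [[0, 0, −1, 1], [−k, −k, kl, −1], [1, 0, −l, 0], [1, 1, −l, 0]], i.e., det(ζ·I − M), equals ζ²(ζ+k)(ζ+l) + (ζ+k)(ζ+l) + (1−kl), which expanded is ζ⁴ + (k+l)ζ³ + (kl+1)ζ² + (k+l)ζ + 1. -/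
open Polynomial

/-- The characteristic polynomial of the homology action of the composition of
Dehn twists in the paper's genus-2 example equals
`ζ²(ζ+k)(ζ+l) + (ζ+k)(ζ+l) + (1−kl) = ζ⁴ + (k+l)ζ³ + (kl+1)ζ² + (k+l)ζ + 1`. -/
theorem stmt_6 (k l : ℤ) :
    (Matrix.charpoly (!![0, 0, -1, 1; -k, -k, k*l, -1; 1, 0, -l, 0; 1, 1, -l, 0] :
        Matrix (Fin 4) (Fin 4) ℤ)) =
      X^2 * (X + C k) * (X + C l) + (X + C k) * (X + C l) + C (1 - k*l) ∧
    (Matrix.charpoly (!![0, 0, -1, 1; -k, -k, k*l, -1; 1, 0, -l, 0; 1, 1, -l, 0] :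
        Matrix (Fin 4) (Fin 4) ℤ)) =
      X^4 + C (k + l) * X^3 + C (k*l + 1) * X^2 + C (k + l) * X + 1 := by
  have h : (Matrix.charpoly (!![0, 0, -1, 1; -k, -k, k*l, -1; 1, 0, -l, 0; 1, 1, -l, 0] :
        Matrix (Fin 4) (Fin 4) ℤ)) =
      X^4 + C (k + l) * X^3 + C (k*l + 1) * X^2 + C (k + l) * X + 1 := by
    have hc : Matrix.charmatrix (!![0, 0, -1, 1; -k, -k, k*l, -1; 1, 0, -l, 0; 1, 1, -l, 0] :
        Matrix (Fin 4) (Fin 4) ℤ) =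
        !![X, 0, 1, -1; C k, X + C k, -(C k * C l), 1; -1, 0, X + C l, 0; -1, -1, C l, X] := by
      ext1 i j
      fin_cases i <;> fin_cases j <;> simp [Matrix.charmatrix_apply]
    rw [Matrix.charpoly, hc, Matrix.det_succ_row_zero]
    simp only [Fin.sum_univ_four, Matrix.det_fin_three, Matrix.submatrix_apply]
    simp [Fin.succAbove, Fin.lt_def]
    ring
  refine ⟨?_, h⟩
  rw [h]
  simp only [map_add, map_sub, map_mul, map_one]
  ring
end

section
/- For all integers k > 4 and l > 4, the polynomial P(ζ) = ζ⁴ + (k+l)ζ³ + (kl+1)ζ² + (k+l)ζ + 1 has no complex root which is a root of unity; that is, there is no complex number η and positive integer m with η^m = 1 and P(η) = 0. -/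
/-- For integers `k, l > 4` the polynomial
`ζ⁴ + (k+l)ζ³ + (kl+1)ζ² + (k+l)ζ + 1` has no root of unity as a root. -/
theorem stmt_7 (k l : ℤ) (hk : 4 < k) (hl : 4 < l) :
    ¬ ∃ η : ℂ, (∃ m : ℕ, 0 < m ∧ η ^ m = 1) ∧
      η^4 + ((k : ℂ) + l) * η^3 + ((k : ℂ) * l + 1) * η^2 + ((k : ℂ) + l) * η + 1 = 0 := by
  rintro ⟨η, ⟨m, hm, h1⟩, h⟩
  have hn : ‖η‖ = 1 := Complex.norm_eq_one_of_pow_eq_one h1 hm.ne'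
  have hc : η * (starRingEnd ℂ) η = 1 := by
    rw [Complex.mul_conj, Complex.normSq_eq_norm_sq, hn]; norm_num
  have ht : η + (starRingEnd ℂ) η = ((2 * η.re : ℝ) : ℂ) := Complex.add_conj η
  have h0 : η ≠ 0 := by
    rintro rfl
    simp at hc
  have key : (η + (starRingEnd ℂ) η + k) * (η + (starRingEnd ℂ) η + l) = 1 := by
    have : η ^ 2 * ((η + (starRingEnd ℂ) η + k) * (η + (starRingEnd ℂ) η + l) - 1) = 0 := by
      generalize (starRingEnd ℂ) η = z at *
      have e : η ^ 2 * ((η + z + k) * (η + z + l) - 1)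
          = (η * (η + z) + k * η) * (η * (η + z) + l * η) - η ^ 2 := by ring
      have e2 : η * (η + z) = η ^ 2 + 1 := by rw [mul_add, hc]; ring
      rw [e, e2, ← h]; ring
    have := (mul_eq_zero.mp this).resolve_left (pow_ne_zero 2 h0)
    exact sub_eq_zero.mp this
  rw [ht] at key
  have key' : (2 * η.re + (k : ℝ)) * (2 * η.re + (l : ℝ)) = 1 := by exact_mod_cast key
  have hre : -1 ≤ η.re := by
    have := Complex.abs_re_le_norm η
    rw [hn] at this
    exact (abs_le.mp this).1
  have hk' : (4 : ℝ) < k := by exact_mod_cast hk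
  have hl' : (4 : ℝ) < l := by exact_mod_cast hl
  nlinarith [mul_pos (show 0 < 2 * η.re + (k : ℝ) - 2 by linarith)
    (show 0 < 2 * η.re + (l : ℝ) - 2 by linarith)]
end

section
/- Let k and l be odd integers with k + l ≡ 0 (mod 4) (equivalently, k ≢ l (mod 4)). Then the polynomial P(X) = X⁴ + (k+l)X³ + (kl+1)X² + (k+l)X + 1 is irreducible over ℚ. -/
open Polynomial

lemma quartic_eisenstein (a b c d : ℤ) (ha : 2 ∣ a) (hb : 2 ∣ b) (hc : 2 ∣ c) (hd : 2 ∣ d)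
    (hd4 : ¬ (4 : ℤ) ∣ d) :
    Irreducible (X^4 + C a * X^3 + C b * X^2 + C c * X + C d : ℤ[X]) := by
  have hdeg : (X^4 + C a * X^3 + C b * X^2 + C c * X + C d : ℤ[X]).natDegree = 4 := by
    compute_degree!
  have hm : (X^4 + C a * X^3 + C b * X^2 + C c * X + C d : ℤ[X]).Monic := by
    monicity!
  have hdeg' : (X^4 + C a * X^3 + C b * X^2 + C c * X + C d : ℤ[X]).degree = 4 := by
    rw [degree_eq_natDegree hm.ne_zero, hdeg]; rfl
  refine irreducible_of_eisenstein_criterion (P := Ideal.span {(2 : ℤ)}) ?_ ?_ ?_ ?_ ?_ hm.isPrimitive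
  · rw [Ideal.span_singleton_prime (by norm_num)]
    exact Int.prime_two
  · rw [hm.leadingCoeff, Ideal.mem_span_singleton]
    norm_num
  · intro n hn
    rw [hdeg'] at hn
    have hn' : n < 4 := by exact_mod_cast hn
    rw [Ideal.mem_span_singleton]
    interval_cases n <;> simp [-eq_intCast, -map_intCast, coeff_X, coeff_X_pow, coeff_C, ha, hb, hc, hd]
  · rw [hdeg']; norm_num
  · rw [Ideal.span_singleton_pow, Ideal.mem_span_singleton]
    simpa using hd4

/-- For odd integers `k, l` with `k + l ≡ 0 (mod 4)`, the polynomial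
`X⁴ + (k+l)X³ + (kl+1)X² + (k+l)X + 1` is irreducible over `ℚ`. -/
theorem stmt_11 (k l : ℤ) (hk : Odd k) (hl : Odd l) (h4 : (4 : ℤ) ∣ (k + l)) :
    Irreducible
      (X^4 + C ((k : ℚ) + l) * X^3 + C ((k : ℚ) * l + 1) * X^2 +
        C ((k : ℚ) + l) * X + 1 : ℚ[X]) := by
  obtain ⟨s, hs⟩ := h4
  have hm : ∃ m, k * l + 1 = 4 * m := by
    obtain ⟨j, rfl⟩ := hk
    have : l = 4 * s - (2 * j + 1) := by linarith
    subst this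
    exact ⟨s * (2 * j + 1) - j * j - j, by ring⟩
  obtain ⟨m, hm⟩ := hm
  have key := quartic_eisenstein (4 + 4 * s) (6 + 3 * (4 * s) + 4 * m) (4 + 4 * (4 * s) + 2 * (4 * m))
    (2 + 2 * (4 * s) + 4 * m) (by omega) (by omega) (by omega) (by omega) (by omega)
  rw [Monic.irreducible_iff_irreducible_map_fraction_map (K := ℚ) (by monicity!)] at key
  rw [← MulEquiv.irreducible_iff (taylorEquiv (1 : ℚ))]
  convert key using 1
  have hs' : (k : ℚ) + l = 4 * s := by exact_mod_cast hs
  have hm' : (k : ℚ) * l + 1 = 4 * m := by exact_mod_cast hm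
  rw [hs', hm']
  change taylor (1 : ℚ) _ = _
  have hC : (C (4 : ℚ)) = 4 := rfl
  simp [taylor_apply, hC]
  ring
end
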